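/- Let E be a finite-dimensional real inner product space, let U ⊆ ℝ × E be an open set, let F be a finite-dimensional real normed space, let g : ℝ × E → F be a smooth map, and let N = {x ∈ U : g x = 0}. Suppose that every point p ∈ U has an open neighborhood V ⊆ U carrying a smooth local vector field Y : V → ℝ × E such that Y q is future-directed timelike (i.e. ‖(Y q).2‖ < (Y q).1) for every q ∈ V, and the derivative of g annihilates Y along N, i.e. (fderiv ℝ g q) (Y q) = 0 for every q ∈ V ∩ N. Then there exists a smooth vector field X : U → ℝ × E such that X q is future-directed timelike for every q ∈ U and (fderiv ℝ g q) (X q) = 0 for every q ∈ N. (This is the Minkowski-ambient form of the paper's Lemma 1: a nonsingular future-directed timelike vector field tangent to the submanifold N = g⁻¹(0) can be extended globally, by gluing local fields with a smooth partition of unity, using that at each point the admissible vectors form a convex set.) -/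

import Mathlib

/-- Minkowski-ambient form of the paper's Lemma 1: if every point of the open set `U`
in the Minkowski space `ℝ × E` has a neighborhood carrying a smooth future-directed
timelike vector field tangent to `N = {x ∈ U | g x = 0}` (in the sense that the
derivative of `g` annihilates it along `N`), then there is a global smooth
future-directed timelike vector field on `U` tangent to `N` everywhere on `N`. -/
theorem exists_global_timelike_field_tangent_to_level_set
    (E : Type*) [NormedAddCommGroup E] [InnerProductSpace ℝ E]
    [FiniteDimensional ℝ E]
    (F : Type*) [NormedAddCommGroup F] [NormedSpace ℝ F] [FiniteDimensional ℝ F]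
    (U : Set (ℝ × E)) (hU : IsOpen U)
    (g : ℝ × E → F) (hg : ContDiff ℝ (⊤ : ℕ∞) g)
    (N : Set (ℝ × E)) (hN : N = {x ∈ U | g x = 0})
    (hloc : ∀ p ∈ U, ∃ V : Set (ℝ × E), IsOpen V ∧ p ∈ V ∧ V ⊆ U ∧
      ∃ Y : ℝ × E → ℝ × E, ContDiffOn ℝ (⊤ : ℕ∞) Y V ∧
        (∀ q ∈ V, ‖(Y q).2‖ < (Y q).1) ∧
        (∀ q ∈ V ∩ N, fderiv ℝ g q (Y q) = 0)) :
    ∃ X : ℝ × E → ℝ × E, ContDiffOn ℝ (⊤ : ℕ∞) X U ∧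
      (∀ q ∈ U, ‖(X q).2‖ < (X q).1) ∧
      (∀ q ∈ N, fderiv ℝ g q (X q) = 0) := by
  classical
  let O : TopologicalSpace.Opens (ℝ × E) := ⟨U, hU⟩
  haveI : LocallyCompactSpace O := hU.locallyCompactSpace
  haveI : SigmaCompactSpace O := inferInstance
  let t : O → Set (ℝ × E) := fun q =>
    {v | ‖v.2‖ < v.1 ∧ ((q : ℝ × E) ∈ N → fderiv ℝ g q v = 0)}
  have ht : ∀ q, Convex ℝ (t q) := by
    intro q v hv w hw a b ha hb hab
    refine ⟨?_, fun hq => ?_⟩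
    · have h1 : ‖(a • v + b • w).2‖ ≤ a * ‖v.2‖ + b * ‖w.2‖ := by
        refine (norm_add_le _ _).trans (le_of_eq ?_)
        simp [norm_smul, abs_of_nonneg ha, abs_of_nonneg hb]
      refine h1.trans_lt ?_
      have hv1 := hv.1
      have hw1 := hw.1
      simp only [Prod.fst_add, Prod.smul_fst, smul_eq_mul]
      rcases ha.eq_or_lt with h | h
      · subst h
        have : b = 1 := by linarith
        subst this
        linarith
      · have := mul_lt_mul_of_pos_left hv1 h
        have := mul_le_mul_of_nonneg_left hw1.le hb
        linarith
    · rw [map_add, map_smul, map_smul, hv.2 hq, hw.2 hq]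
      simp
  obtain ⟨f, hf⟩ := exists_contMDiffMap_forall_mem_convex_of_local (n := ⊤)
    (modelWithCornersSelf ℝ (ℝ × E)) (t := t) ht (by
      intro p
      obtain ⟨V, hV, hpV, hVU, Y, hY, hY1, hY2⟩ := hloc p p.2
      refine ⟨Subtype.val ⁻¹' V, (hV.preimage continuous_subtype_val).mem_nhds hpV,
        fun q => Y q, ?_, fun q hq => ⟨hY1 q hq, fun hqN => hY2 q ⟨hq, hqN⟩⟩⟩
      intro q hq
      apply ContMDiffAt.contMDiffWithinAt
      rw [contMDiffAt_subtype_iff]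
      exact (hY.contDiffAt (hV.mem_nhds hq)).contMDiffAt)
  let X : ℝ × E → ℝ × E := fun q => if h : q ∈ U then f ⟨q, h⟩ else 0
  have hX : ∀ q (h : q ∈ U), X q = f ⟨q, h⟩ := fun q h => dif_pos h
  refine ⟨X, ?_, ?_, ?_⟩
  · intro q hq
    apply ContDiffAt.contDiffWithinAt
    rw [← contMDiffAt_iff_contDiffAt]
    have h := f.contMDiff (⟨q, hq⟩ : O)
    have he : (f : O → ℝ × E) = fun x : O => X x := by
      funext x
      exact (hX x x.2).symm
    rw [he] at h
    exact contMDiffAt_subtype_iff.1 h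
  · intro q hq
    rw [hX q hq]
    exact (hf ⟨q, hq⟩).1
  · intro q hq
    have hqU : q ∈ U := by
      rw [hN] at hq
      exact hq.1
    rw [hX q hqU]
    exact (hf ⟨q, hqU⟩).2 hq
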